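/- arXiv:1512.08609 — 2 statements merged into one kernel-verified Lean document; each statement's English description precedes it below -/
import Mathlib

section
/- Under the stability condition ρ(1 + β₁γ_{1,1}) < 1, the steady-state server failure frequency satisfies P_f = lim_{z→1⁻} (β₁P̃₁(z) + β₂P̃₂(z)) = ρβ₁ + σβ₂(1 − ρ(1 + β₁γ_{1,1}))/(1 + σ(1 + β₂γ_{2,1})), where ρ = λμ_{1,1} and σ = αμ_{2,1}. -/
open MeasureTheory

/-- Laplace transform of a (Borel) measure on `ℝ`. -/
noncomputable def lapl (μ : Measure ℝ) (θ : ℝ) : ℝ :=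
  ∫ x, Real.exp (-θ * x) ∂μ

lemma lapl_slope (m : Measure ℝ) [IsProbabilityMeasure m] (h0 : m (Set.Iio 0) = 0)
    (hi : Integrable (fun x => x) m) :
    Filter.Tendsto (fun θ => (1 - lapl m θ) / θ) (nhdsWithin 0 (Set.Ioi 0))
      (nhds (∫ x, x ∂m)) := by
  have hpos : ∀ᵐ x ∂m, 0 ≤ x := by
    rw [ae_iff]
    simpa [Set.Iio] using h0
  have key : Filter.Tendsto (fun θ : ℝ => ∫ x, (1 - Real.exp (-θ * x)) / θ ∂m)
      (nhdsWithin 0 (Set.Ioi 0)) (nhds (∫ x, x ∂m)) := by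
    apply tendsto_integral_filter_of_dominated_convergence (fun x => x)
    · refine Filter.Eventually.of_forall fun θ => ?_
      exact Measurable.aestronglyMeasurable (by fun_prop)
    · filter_upwards [self_mem_nhdsWithin] with θ hθ
      have hθ : 0 < θ := hθ
      filter_upwards [hpos] with x hx
      have h1 : Real.exp (-θ * x) ≤ 1 := by
        apply Real.exp_le_one_iff.2
        nlinarith
      have h2 := Real.add_one_le_exp (-θ * x)
      rw [Real.norm_eq_abs, abs_of_nonneg (div_nonneg (by linarith) hθ.le), div_le_iff₀ hθ]
      linarith
    · exact hi
    · refine Filter.Eventually.of_forall fun x => ?_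
      have hd : HasDerivAt (fun θ : ℝ => 1 - Real.exp (-θ * x)) x 0 := by
        have h := ((((hasDerivAt_id (0:ℝ)).neg).mul_const x).exp).const_sub 1
        have e : -(Real.exp ((-id) 0 * x) * (-1 * x)) = x := by simp
        rw [e] at h
        exact h
      have := (hasDerivAt_iff_tendsto_slope.1 hd).mono_left
        (nhdsWithin_mono 0 (fun y (hy : 0 < y) => (ne_of_gt hy : y ≠ 0)))
      refine this.congr fun θ => ?_
      simp [slope_def_field]
  refine key.congr' ?_
  filter_upwards [self_mem_nhdsWithin] with θ hθ
  have hθ : 0 < θ := hθ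
  have hint : Integrable (fun x => Real.exp (-θ * x)) m := by
    refine Integrable.of_bound (C := 1) (Measurable.aestronglyMeasurable (by fun_prop)) ?_
    filter_upwards [hpos] with x hx
    rw [Real.norm_eq_abs, Real.abs_exp]
    apply Real.exp_le_one_iff.2
    nlinarith
  rw [integral_div, integral_sub (integrable_const _) hint]
  simp [lapl]

lemma lapl_le_one (m : Measure ℝ) [IsProbabilityMeasure m] (h0 : m (Set.Iio 0) = 0)
    {θ : ℝ} (hθ : 0 ≤ θ) : lapl m θ ≤ 1 := by
  have hpos : ∀ᵐ x ∂m, 0 ≤ x := by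
    rw [ae_iff]
    simpa [Set.Iio] using h0
  have : ‖lapl m θ‖ ≤ 1 * m.real Set.univ := by
    apply norm_integral_le_of_norm_le_const
    filter_upwards [hpos] with x hx
    rw [Real.norm_eq_abs, Real.abs_exp]
    apply Real.exp_le_one_iff.2
    nlinarith
  simp at this
  exact (le_abs_self _).trans this

lemma h_delta_limits (lam beta : ℝ) (hlam : 0 < lam) (hbeta : 0 ≤ beta)
    (S R : Measure ℝ) [IsProbabilityMeasure S] [IsProbabilityMeasure R]
    (hS : S (Set.Iio 0) = 0) (hR : R (Set.Iio 0) = 0)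
    (hiS : Integrable (fun x => x) S) (hiR : Integrable (fun x => x) R)
    (h δ : ℝ → ℝ)
    (hh : ∀ z, h z = lam + beta - lam * z - beta * lapl R (lam - lam * z))
    (hδ : ∀ z, δ z = lapl S (h z)) :
    (∀ z < 1, 0 < h z) ∧
    Filter.Tendsto (fun z => (1 - δ z) / h z) (nhdsWithin 1 (Set.Iio 1)) (nhds (∫ x, x ∂S)) ∧
    Filter.Tendsto (fun z => (1 - δ z) / (1 - z)) (nhdsWithin 1 (Set.Iio 1))
      (nhds ((∫ x, x ∂S) * (lam * (1 + beta * ∫ x, x ∂ R)))) := by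
  have hpos : ∀ z < 1, 0 < h z := by
    intro z hz
    have : lapl R (lam - lam * z) ≤ 1 := lapl_le_one R hR (by nlinarith)
    rw [hh]
    nlinarith
  have hid : Filter.Tendsto (fun z : ℝ => z) (nhdsWithin 1 (Set.Iio 1)) (nhds 1) :=
    tendsto_nhdsWithin_of_tendsto_nhds Filter.tendsto_id
  have ht : Filter.Tendsto (fun z : ℝ => lam - lam * z) (nhdsWithin 1 (Set.Iio 1))
      (nhdsWithin 0 (Set.Ioi 0)) := by
    apply tendsto_nhdsWithin_of_tendsto_nhds_of_eventually_within
    · simpa using (hid.const_mul lam).const_sub lam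
    · filter_upwards [self_mem_nhdsWithin] with z hz
      have hz : z < 1 := hz
      show 0 < lam - lam * z
      nlinarith
  have hr := (lapl_slope R hR hiR).comp ht
  have hq : Filter.Tendsto (fun z => h z / (1 - z)) (nhdsWithin 1 (Set.Iio 1))
      (nhds (lam * (1 + beta * ∫ x, x ∂ R))) := by
    refine (((hr.const_mul beta).const_add 1).const_mul lam).congr' ?_
    filter_upwards [self_mem_nhdsWithin] with z hz
    have hz : z < 1 := hz
    have h1 : (1 - z) ≠ 0 := by linarith
    have h2 : lam - lam * z ≠ 0 := by
      have : 0 < lam * (1 - z) := mul_pos hlam (by linarith)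
      linarith
    simp only [Function.comp]
    rw [hh]
    have e : lam - lam * z = lam * (1 - z) := by ring
    generalize lapl R (lam - lam * z) = L
    rw [e]
    field_simp
    ring
  have hh0 : Filter.Tendsto h (nhdsWithin 1 (Set.Iio 1)) (nhdsWithin 0 (Set.Ioi 0)) := by
    apply tendsto_nhdsWithin_of_tendsto_nhds_of_eventually_within
    · have := hq.mul (hid.const_sub 1)
      simp only [sub_self, mul_zero] at this
      refine this.congr' ?_
      filter_upwards [self_mem_nhdsWithin] with z hz
      have hz : z < 1 := hz
      have h1 : (1 - z) ≠ 0 := by linarith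
      field_simp
    · filter_upwards [self_mem_nhdsWithin] with z hz
      exact hpos z hz
  have hs : Filter.Tendsto (fun z => (1 - δ z) / h z) (nhdsWithin 1 (Set.Iio 1))
      (nhds (∫ x, x ∂S)) := by
    refine ((lapl_slope S hS hiS).comp hh0).congr fun z => ?_
    simp [hδ]
  refine ⟨hpos, hs, (hs.mul hq).congr' ?_⟩
  filter_upwards [self_mem_nhdsWithin] with z hz
  have := (hpos z hz).ne'
  field_simp

/-- steady-state server failure frequency
`P_f = lim_{z→1⁻} (β₁P̃₁(z) + β₂P̃₂(z))
     = ρβ₁ + σβ₂(1 − ρ(1 + β₁γ_{1,1}))/(1 + σ(1 + β₂γ_{2,1}))`. -/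
theorem server_failure_frequency
    (lam alpha nu beta1 beta2 : ℝ)
    (hlam : 0 < lam) (halpha : 0 < alpha) (hnu : 0 < nu)
    (hbeta1 : 0 ≤ beta1) (hbeta2 : 0 ≤ beta2)
    (S1 R1 S2 R2 : Measure ℝ)
    [IsProbabilityMeasure S1] [IsProbabilityMeasure R1]
    [IsProbabilityMeasure S2] [IsProbabilityMeasure R2]
    (hS1 : S1 (Set.Iio 0) = 0) (hR1 : R1 (Set.Iio 0) = 0)
    (hS2 : S2 (Set.Iio 0) = 0) (hR2 : R2 (Set.Iio 0) = 0)
    (hiS1 : Integrable (fun x => x) S1) (hiR1 : Integrable (fun x => x) R1)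
    (hiS2 : Integrable (fun x => x) S2) (hiR2 : Integrable (fun x => x) R2)
    (mu11 gamma11 mu21 gamma21 : ℝ)
    (hmu11 : mu11 = ∫ x, x ∂S1) (hgamma11 : gamma11 = ∫ x, x ∂ R1)
    (hmu21 : mu21 = ∫ x, x ∂S2) (hgamma21 : gamma21 = ∫ x, x ∂ R2)
    (rho sigma : ℝ) (hrho : rho = lam * mu11) (hsigma : sigma = alpha * mu21)
    (h1 h2 δ1 δ2 g φ : ℝ → ℝ)
    (hh1 : ∀ z, h1 z = lam + beta1 - lam * z - beta1 * lapl R1 (lam - lam * z))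
    (hh2 : ∀ z, h2 z = lam + beta2 - lam * z - beta2 * lapl R2 (lam - lam * z))
    (hδ1 : ∀ z, δ1 z = lapl S1 (h1 z)) (hδ2 : ∀ z, δ2 z = lapl S2 (h2 z))
    (hg : ∀ u, g u = (lam * (1 - δ1 u) + alpha * (1 - δ2 u)) / (nu * (δ1 u - u)))
    (hφ : ∀ z, φ z = Real.exp (-(∫ u in z..1, g u)))
    (P0 : ℝ → ℝ)
    (hP0 : ∀ z, P0 z = ((1 - rho * (1 + beta1 * gamma11)) /
      (1 + sigma * (1 + beta2 * gamma21))) * φ z)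
    (P1 P2 : ℝ → ℝ)
    (hP1 : ∀ z, P1 z = (lam * (1 - z) + alpha * (1 - δ2 z)) * (1 - δ1 z) /
      ((δ1 z - z) * h1 z) * P0 z)
    (hP2 : ∀ z, P2 z = alpha * (1 - δ2 z) / h2 z * P0 z)
    (hstab : rho * (1 + beta1 * gamma11) < 1) :
    Filter.Tendsto (fun z : ℝ => beta1 * P1 z + beta2 * P2 z) (nhdsWithin 1 (Set.Iio 1))
      (nhds (rho * beta1 + sigma * beta2 * (1 - rho * (1 + beta1 * gamma11)) /
        (1 + sigma * (1 + beta2 * gamma21)))) := by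
  obtain ⟨p1, s1, d1⟩ := h_delta_limits lam beta1 hlam hbeta1 S1 R1 hS1 hR1 hiS1 hiR1 h1 δ1 hh1 hδ1
  obtain ⟨p2, s2, d2⟩ := h_delta_limits lam beta2 hlam hbeta2 S2 R2 hS2 hR2 hiS2 hiR2 h2 δ2 hh2 hδ2
  rw [← hmu11] at s1
  rw [← hmu21] at s2
  rw [← hmu11, ← hgamma11] at d1
  rw [← hmu21, ← hgamma21] at d2
  have nn : ∀ m : Measure ℝ, m (Set.Iio 0) = 0 → 0 ≤ ∫ x, x ∂m := by
    intro m hm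
    apply integral_nonneg_of_ae
    show ∀ᵐ x ∂m, 0 ≤ x
    rw [ae_iff]
    simpa [Set.Iio] using hm
  have hmu21n : 0 ≤ mu21 := hmu21 ▸ nn S2 hS2
  have hg21n : 0 ≤ gamma21 := hgamma21 ▸ nn R2 hR2
  have hsn : 0 ≤ sigma := by rw [hsigma]; positivity
  have hD : 0 < 1 + sigma * (1 + beta2 * gamma21) := by positivity
  have hA : 0 < 1 - rho * (1 + beta1 * gamma11) := by linarith
  have hid : Filter.Tendsto (fun z : ℝ => z) (nhdsWithin 1 (Set.Iio 1)) (nhds 1) :=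
    tendsto_nhdsWithin_of_tendsto_nhds Filter.tendsto_id
  have hden : Filter.Tendsto (fun z => (δ1 z - z) / (1 - z)) (nhdsWithin 1 (Set.Iio 1))
      (nhds (1 - rho * (1 + beta1 * gamma11))) := by
    have := d1.const_sub 1
    have e : 1 - mu11 * (lam * (1 + beta1 * gamma11)) = 1 - rho * (1 + beta1 * gamma11) := by
      rw [hrho]; ring
    rw [e] at this
    refine this.congr' ?_
    filter_upwards [self_mem_nhdsWithin] with z hz
    have hz : z < 1 := hz
    have h1 : (1 - z) ≠ 0 := by linarith
    field_simp
    ring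
  have hgl := (((d1.const_mul lam).add (d2.const_mul alpha)).div (hden.const_mul nu)
    (mul_pos hnu hA).ne')
  have hgl' : ∃ L, Filter.Tendsto g (nhdsWithin 1 (Set.Iio 1)) (nhds L) := by
    refine ⟨_, hgl.congr' ?_⟩
    filter_upwards [self_mem_nhdsWithin] with z hz
    have hz : z < 1 := hz
    have h1 : (1 - z) ≠ 0 := by linarith
    simp only [Pi.div_apply]
    rw [hg, ← mul_div_assoc, ← mul_div_assoc, ← mul_div_assoc, ← add_div,
      div_div_div_cancel_right₀ h1]
  obtain ⟨L, hL⟩ := hgl'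
  have hI : Filter.Tendsto (fun z => ∫ u in z..1, g u) (nhdsWithin 1 (Set.Iio 1)) (nhds 0) := by
    have hb : ∀ᶠ u in nhdsWithin 1 (Set.Iio 1), ‖g u‖ < ‖L‖ + 1 :=
      hL.norm.eventually_lt_const (by linarith)
    obtain ⟨l, hl, hl2⟩ := (mem_nhdsLT_iff_exists_Ioo_subset).1 hb
    have hl : l < 1 := hl
    have ht : Filter.Tendsto (fun z : ℝ => max (‖L‖ + 1) ‖g 1‖ * |1 - z|)
        (nhdsWithin 1 (Set.Iio 1)) (nhds 0) := by
      simpa using ((hid.const_sub 1).abs).const_mul (max (‖L‖ + 1) ‖g 1‖)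
    refine squeeze_zero_norm' ?_ ht
    filter_upwards [Ioo_mem_nhdsLT hl] with z hz
    apply intervalIntegral.norm_integral_le_of_norm_le_const
    intro u hu
    rw [Set.uIoc_of_le hz.2.le] at hu
    rcases hu.2.eq_or_lt with h | h
    · rw [h]; exact le_max_right _ _
    · exact (le_of_lt (hl2 ⟨hz.1.trans hu.1, h⟩)).trans (le_max_left _ _)
  have hφ1 : Filter.Tendsto φ (nhdsWithin 1 (Set.Iio 1)) (nhds 1) := by
    have := (Real.continuous_exp.tendsto _).comp hI.neg
    simp only [neg_zero, Real.exp_zero] at this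
    exact this.congr fun z => by simp [hφ]
  have hP0l := hφ1.const_mul ((1 - rho * (1 + beta1 * gamma11)) /
      (1 + sigma * (1 + beta2 * gamma21)))
  have hP1l := ((((d2.const_mul alpha).const_add lam).mul s1).div hden hA.ne').mul hP0l
  have hP2l := (s2.const_mul alpha).mul hP0l
  have hfin := (hP1l.const_mul beta1).add (hP2l.const_mul beta2)
  convert hfin.congr' ?_ using 2
  · have e : lam + alpha * (mu21 * (lam * (1 + beta2 * gamma21))) =
        lam * (1 + sigma * (1 + beta2 * gamma21)) := by rw [hsigma]; ring
    rw [e, ← hsigma]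
    have hA' := hA.ne'
    have hD' := hD.ne'
    have e2 : rho = lam * mu11 := hrho
    generalize 1 - rho * (1 + beta1 * gamma11) = A at *
    generalize 1 + sigma * (1 + beta2 * gamma21) = D at *
    rw [e2]
    field_simp
  · filter_upwards [self_mem_nhdsWithin] with z hz
    have hz' : z < 1 := hz
    have h1' : (1 - z) ≠ 0 := by linarith
    have q1 := (p1 z hz).ne'
    rw [hP1, hP2, hP0]
    simp only [Pi.div_apply]
    congr 2
    · congr 1
      by_cases hd : δ1 z - z = 0
      · simp [hd]
      · field_simp
    · ring
end

section
/- Assume the stability condition ρ(1 + β₁γ_{1,1}) < 1 and that the service and repair distributions have finite second moments μ_{i,2}, γ_{i,2}. Then the orbit-size generating function P(z) = [λ(1−z) + α(1 − δ₂(z))]/(λ(δ₁(z) − z)) · P₀(z) has a left derivative at z = 1 equal to E[N] = λ²[β₁μ_{1,1}γ_{1,2} + (1 + β₁γ_{1,1})²μ_{1,2}] / (2[1 − ρ(1 + β₁γ_{1,1})]) + λα[β₂μ_{2,1}γ_{2,2} + (1 + β₂γ_{2,1})²μ_{2,2}] / (2[1 + σ(1 + β₂γ_{2,1})]) + λ[ρ(1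 + β₁γ_{1,1}) + σ(1 + β₂γ_{2,1})] / (ν[1 − ρ(1 + β₁γ_{1,1})]), where ρ = λμ_{1,1} and σ = αμ_{2,1}. -/
open MeasureTheory

open Filter Topology

lemma ae_nonneg_of_Iio (μ : Measure ℝ) (h0 : μ (Set.Iio 0) = 0) : ∀ᵐ x ∂μ, 0 ≤ x := by
  rw [ae_iff]
  convert h0 using 2
  ext x
  simp

lemma exp_taylor_bounds (t : ℝ) (ht : 0 ≤ t) :
    0 ≤ Real.exp (-t) - 1 + t ∧ Real.exp (-t) - 1 + t ≤ t ^ 2 := by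
  constructor
  · linarith [Real.add_one_le_exp (-t)]
  · have h1 : 1 + t ≤ Real.exp t := by linarith [Real.add_one_le_exp t]
    have h2 : Real.exp (-t) * Real.exp t = 1 := by rw [← Real.exp_add]; simp
    have h3 := Real.exp_pos (-t)
    have h4 : Real.exp (-t) * (1 + t) ≤ 1 := by
      exact (mul_le_mul_of_nonneg_left h1 h3.le).trans h2.le
    have h5 : (Real.exp (-t) - 1 + t) * (1 + t) ≤ t ^ 2 * (1 + t) := by nlinarith [mul_nonneg ht (sq_nonneg t)]
    exact le_of_mul_le_mul_right h5 (by linarith)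

lemma exp_taylor_lim : Tendsto (fun t : ℝ => (Real.exp (-t) - 1 + t) / t ^ 2) (𝓝[>] 0) (𝓝 (1 / 2)) := by
  have key : ∀ t : ℝ, 0 < t → t ≤ 1 → |(Real.exp (-t) - 1 + t) / t ^ 2 - 1 / 2| ≤ t := by
    intro t ht ht1
    have hb := Real.exp_bound (x := -t) (by rw [abs_neg, abs_of_pos ht]; exact ht1) (n := 3) (by norm_num)
    simp [Finset.sum_range_succ, Nat.factorial] at hb
    rw [abs_of_pos ht] at hb
    have : (Real.exp (-t) - 1 + t) / t ^ 2 - 1 / 2 = (Real.exp (-t) - (1 + -t + t ^ 2 / 2)) / t ^ 2 := by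
      field_simp; ring
    rw [this, abs_div, abs_of_pos (by positivity : 0 < t ^ 2), div_le_iff₀ (by positivity)]
    refine hb.trans ?_
    have : 0 < t ^ 3 := by positivity
    nlinarith
  rw [tendsto_iff_norm_sub_tendsto_zero]
  refine squeeze_zero' (g := fun t => t) (Eventually.of_forall fun _ => norm_nonneg _) ?_
    (tendsto_nhdsWithin_of_tendsto_nhds tendsto_id)
  filter_upwards [Ioc_mem_nhdsGT (zero_lt_one (α := ℝ))] with t ht
  exact key t ht.1 ht.2

/-- second-order remainder of the Laplace transform -/
noncomputable def remL (μ : Measure ℝ) (θ : ℝ) : ℝ :=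
  (lapl μ θ - 1 + (∫ x, x ∂μ) * θ) / θ ^ 2

lemma one_sub_lapl (μ : Measure ℝ) (θ : ℝ) (hθ : θ ≠ 0) :
    1 - lapl μ θ = (∫ x, x ∂μ) * θ - θ ^ 2 * remL μ θ := by
  unfold remL
  field_simp
  ring

lemma integrable_exp_lapl (μ : Measure ℝ) [IsProbabilityMeasure μ] (h0 : μ (Set.Iio 0) = 0)
    (θ : ℝ) (hθ : 0 < θ) : Integrable (fun x => Real.exp (-θ * x)) μ := by
  refine Integrable.mono' (integrable_const (1 : ℝ)) (by fun_prop) ?_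
  filter_upwards [ae_nonneg_of_Iio μ h0] with x hx
  rw [Real.norm_eq_abs, abs_of_pos (Real.exp_pos _), Real.exp_le_one_iff]
  nlinarith

lemma remL_tendsto (μ : Measure ℝ) [IsProbabilityMeasure μ] (h0 : μ (Set.Iio 0) = 0)
    (h1 : Integrable (fun x => x) μ) (h2 : Integrable (fun x => x ^ 2) μ) :
    Tendsto (remL μ) (𝓝[>] 0) (𝓝 ((∫ x, x ^ 2 ∂μ) / 2)) := by
  have hF : Tendsto (fun θ : ℝ => ∫ x, (Real.exp (-θ * x) - 1 + x * θ) / θ ^ 2 ∂μ) (𝓝[>] 0)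
      (𝓝 (∫ x, x ^ 2 / 2 ∂μ)) := by
    refine tendsto_integral_filter_of_dominated_convergence (fun x => x ^ 2) ?_ ?_ h2 ?_
    · exact Eventually.of_forall fun θ => by fun_prop
    · filter_upwards [self_mem_nhdsWithin] with θ hθ
      filter_upwards [ae_nonneg_of_Iio μ h0] with x hx
      have hθ' : 0 < θ := hθ
      obtain ⟨ha, hb⟩ := exp_taylor_bounds (θ * x) (by positivity)
      have e : Real.exp (-θ * x) - 1 + x * θ = Real.exp (-(θ * x)) - 1 + θ * x := by
        rw [neg_mul, mul_comm x θ]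
      rw [e, Real.norm_eq_abs, abs_of_nonneg (by positivity), div_le_iff₀ (by positivity)]
      nlinarith
    · filter_upwards [ae_nonneg_of_Iio μ h0] with x hx
      rcases hx.eq_or_lt with rfl | hx
      · simp
      · have ht : Tendsto (fun θ : ℝ => θ * x) (𝓝[>] 0) (𝓝[>] 0) := by
          refine tendsto_nhdsWithin_iff.2 ⟨?_, ?_⟩
          · refine tendsto_nhdsWithin_of_tendsto_nhds ?_
            have : Continuous fun θ : ℝ => θ * x := by fun_prop
            simpa using this.tendsto 0
          · filter_upwards [self_mem_nhdsWithin] with θ hθ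
            exact mul_pos hθ hx
        have := (exp_taylor_lim.comp ht).const_mul (x ^ 2)
        rw [show x ^ 2 / 2 = x ^ 2 * (1 / 2) by ring]
        refine this.congr' ?_
        filter_upwards [self_mem_nhdsWithin] with θ hθ
        have hθ' : θ ≠ 0 := ne_of_gt hθ
        simp only [Function.comp, neg_mul]
        field_simp
  rw [integral_div] at hF
  refine hF.congr' ?_
  filter_upwards [self_mem_nhdsWithin] with θ hθ
  have hi := integrable_exp_lapl μ h0 θ hθ
  have hi2 : Integrable (fun x => Real.exp (-θ * x) - 1) μ := hi.sub (integrable_const _)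
  rw [integral_div, integral_add hi2 (h1.mul_const θ),
    integral_sub hi (integrable_const _), integral_mul_const]
  simp [remL, lapl]

lemma lapl_measurable (μ : Measure ℝ) [IsProbabilityMeasure μ] : Measurable (lapl μ) := by
  have : StronglyMeasurable (fun p : ℝ × ℝ => Real.exp (-p.1 * p.2)) :=
    Continuous.stronglyMeasurable (by fun_prop)
  exact this.integral_prod_right.measurable

lemma delta_expand (lam beta : ℝ) (hlam : 0 < lam) (hbeta : 0 ≤ beta) (S R : Measure ℝ)
    [IsProbabilityMeasure S] [IsProbabilityMeasure R]
    (hS : S (Set.Iio 0) = 0) (hR : R (Set.Iio 0) = 0)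
    (hiS : Integrable (fun x => x) S) (hiR : Integrable (fun x => x) R)
    (hiS2 : Integrable (fun x => x ^ 2) S) (hiR2 : Integrable (fun x => x ^ 2) R)
    (h δ : ℝ → ℝ) (hh : ∀ z, h z = lam + beta - lam * z - beta * lapl R (lam - lam * z))
    (hδ : ∀ z, δ z = lapl S (h z)) :
    Measurable δ ∧ ∃ B : ℝ → ℝ, Tendsto B (𝓝[<] 1) (𝓝 (lam ^ 2 / 2 *
      (beta * (∫ x, x ∂S) * (∫ x, x ^ 2 ∂ R) + (1 + beta * ∫ x, x ∂ R) ^ 2 * ∫ x, x ^ 2 ∂S))) ∧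
      ∀ z < 1, 1 - δ z = lam * (∫ x, x ∂S) * (1 + beta * ∫ x, x ∂ R) * (1 - z) - (1 - z) ^ 2 * B z := by
  have hhm : Measurable h := by
    rw [funext hh]
    have := lapl_measurable R
    fun_prop
  refine ⟨by rw [funext hδ]; exact (lapl_measurable S).comp hhm, ?_⟩
  set m1 := ∫ x, x ∂S
  set m2 := ∫ x, x ^ 2 ∂S
  set g1 := ∫ x, x ∂ R with hg1
  set g2 := ∫ x, x ^ 2 ∂ R
  have hg1n : 0 ≤ g1 := integral_nonneg_of_ae (ae_nonneg_of_Iio R hR)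
  have hk : 0 < 1 + beta * g1 := by positivity
  -- the argument theta
  have hθ : Tendsto (fun z : ℝ => lam - lam * z) (𝓝[<] 1) (𝓝[>] 0) := by
    refine tendsto_nhdsWithin_iff.2 ⟨?_, ?_⟩
    · refine tendsto_nhdsWithin_of_tendsto_nhds ?_
      have : Continuous fun z : ℝ => lam - lam * z := by fun_prop
      simpa using this.tendsto 1
    · filter_upwards [self_mem_nhdsWithin] with z hz
      have : z < 1 := hz
      show 0 < lam - lam * z
      nlinarith
  have hrR := (remL_tendsto R hR hiR hiR2).comp hθ
  have hθ0 : Tendsto (fun z : ℝ => lam - lam * z) (𝓝[<] 1) (𝓝 0) := hθ.mono_right nhdsWithin_le_nhds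
  let K : ℝ → ℝ := fun z => 1 + beta * g1 - beta * ((lam - lam * z) * remL R (lam - lam * z))
  have hK : Tendsto K (𝓝[<] 1) (𝓝 (1 + beta * g1)) := by
    have := ((hθ0.mul hrR).const_mul beta).const_sub (1 + beta * g1)
    simpa [K] using this
  have hhK : ∀ z < 1, h z = (lam - lam * z) * K z := by
    intro z hz
    have hne : lam - lam * z ≠ 0 := by nlinarith
    have := one_sub_lapl R _ hne
    rw [← hg1] at this
    rw [hh]
    simp only [K]
    linear_combination beta * this
  have hht : Tendsto h (𝓝[<] 1) (𝓝[>] 0) := by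
    refine tendsto_nhdsWithin_iff.2 ⟨?_, ?_⟩
    · have := hθ0.mul hK
      rw [zero_mul] at this
      refine this.congr' ?_
      filter_upwards [self_mem_nhdsWithin] with z hz
      exact (hhK z hz).symm
    · filter_upwards [self_mem_nhdsWithin] with z hz
      have hz' : z < 1 := hz
      have hlap : lapl R (lam - lam * z) ≤ 1 := by
        have hp : 0 < lam - lam * z := by nlinarith
        calc lapl R (lam - lam * z) ≤ ∫ x, (1 : ℝ) ∂ R := by
              refine integral_mono_ae (integrable_exp_lapl R hR _ hp) (integrable_const _) ?_
              filter_upwards [ae_nonneg_of_Iio R hR] with x hx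
              rw [Real.exp_le_one_iff]
              nlinarith
          _ = 1 := by simp
      show 0 < h z
      rw [hh]
      nlinarith
  have hrS := (remL_tendsto S hS hiS hiS2).comp hht
  refine ⟨fun z => if h z = 0 then (lam * m1 * (1 + beta * g1) * (1 - z) - (1 - δ z)) / (1 - z) ^ 2 else
    lam ^ 2 * (m1 * (beta * remL R (lam - lam * z)) + K z ^ 2 * remL S (h z)), ?_, ?_⟩
  · have := (((hrR.const_mul beta).const_mul m1).add ((hK.pow 2).mul hrS)).const_mul (lam ^ 2)
    refine (this.congr' ?_).trans (le_of_eq ?_)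
    · filter_upwards [hht self_mem_nhdsWithin] with z hz
      have : h z ≠ 0 := ne_of_gt hz
      simp [this]
    · congr 1; ring
  · intro z hz
    have hne : 1 - z ≠ 0 := by linarith
    dsimp only
    split_ifs with h0
    · field_simp; ring
    · rw [hδ, one_sub_lapl S _ h0, hhK z hz]
      simp only [m1, K]
      ring

/-- the orbit-size generating function
`P(z) = [λ(1−z) + α(1 − δ₂(z))]/(λ(δ₁(z) − z)) · P₀(z)` has a left derivative at
`z = 1` (with value `P(1) = 1`) equal to the mean orbit size
`E[N] = λ²[β₁μ_{1,1}γ_{1,2} + (1 + β₁γ_{1,1})²μ_{1,2}] / (2[1 − ρ(1 + β₁γ_{1,1})])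
      + λα[β₂μ_{2,1}γ_{2,2} + (1 + β₂γ_{2,1})²μ_{2,2}] / (2[1 + σ(1 + β₂γ_{2,1})])
      + λ[ρ(1 + β₁γ_{1,1}) + σ(1 + β₂γ_{2,1})] / (ν[1 − ρ(1 + β₁γ_{1,1})])`. -/
theorem mean_orbit_size
    (lam alpha nu beta1 beta2 : ℝ)
    (hlam : 0 < lam) (halpha : 0 < alpha) (hnu : 0 < nu)
    (hbeta1 : 0 ≤ beta1) (hbeta2 : 0 ≤ beta2)
    (S1 R1 S2 R2 : Measure ℝ)
    [IsProbabilityMeasure S1] [IsProbabilityMeasure R1]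
    [IsProbabilityMeasure S2] [IsProbabilityMeasure R2]
    (hS1 : S1 (Set.Iio 0) = 0) (hR1 : R1 (Set.Iio 0) = 0)
    (hS2 : S2 (Set.Iio 0) = 0) (hR2 : R2 (Set.Iio 0) = 0)
    (hiS1 : Integrable (fun x => x) S1) (hiR1 : Integrable (fun x => x) R1)
    (hiS2 : Integrable (fun x => x) S2) (hiR2 : Integrable (fun x => x) R2)
    (mu11 gamma11 mu21 gamma21 : ℝ)
    (hmu11 : mu11 = ∫ x, x ∂S1) (hgamma11 : gamma11 = ∫ x, x ∂ R1)
    (hmu21 : mu21 = ∫ x, x ∂S2) (hgamma21 : gamma21 = ∫ x, x ∂ R2)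
    (rho sigma : ℝ) (hrho : rho = lam * mu11) (hsigma : sigma = alpha * mu21)
    (h1 h2 δ1 δ2 g φ : ℝ → ℝ)
    (hh1 : ∀ z, h1 z = lam + beta1 - lam * z - beta1 * lapl R1 (lam - lam * z))
    (hh2 : ∀ z, h2 z = lam + beta2 - lam * z - beta2 * lapl R2 (lam - lam * z))
    (hδ1 : ∀ z, δ1 z = lapl S1 (h1 z)) (hδ2 : ∀ z, δ2 z = lapl S2 (h2 z))
    (hg : ∀ u, g u = (lam * (1 - δ1 u) + alpha * (1 - δ2 u)) / (nu * (δ1 u - u)))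
    (hφ : ∀ z, φ z = Real.exp (-(∫ u in z..1, g u)))
    (hiS1sq : Integrable (fun x => x ^ 2) S1) (hiR1sq : Integrable (fun x => x ^ 2) R1)
    (hiS2sq : Integrable (fun x => x ^ 2) S2) (hiR2sq : Integrable (fun x => x ^ 2) R2)
    (mu12 gamma12 mu22 gamma22 : ℝ)
    (hmu12 : mu12 = ∫ x, x ^ 2 ∂S1) (hgamma12 : gamma12 = ∫ x, x ^ 2 ∂ R1)
    (hmu22 : mu22 = ∫ x, x ^ 2 ∂S2) (hgamma22 : gamma22 = ∫ x, x ^ 2 ∂ R2)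
    (P0 : ℝ → ℝ)
    (hP0 : ∀ z, P0 z = ((1 - rho * (1 + beta1 * gamma11)) /
      (1 + sigma * (1 + beta2 * gamma21))) * φ z)
    (P : ℝ → ℝ)
    (hP : ∀ z, P z = (lam * (1 - z) + alpha * (1 - δ2 z)) / (lam * (δ1 z - z)) * P0 z)
    (hstab : rho * (1 + beta1 * gamma11) < 1) :
    Filter.Tendsto (fun z : ℝ => (P z - 1) / (z - 1)) (nhdsWithin 1 (Set.Iio 1))
      (nhds (lam ^ 2 * (beta1 * mu11 * gamma12 + (1 + beta1 * gamma11) ^ 2 * mu12) /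
          (2 * (1 - rho * (1 + beta1 * gamma11))) +
        lam * alpha * (beta2 * mu21 * gamma22 + (1 + beta2 * gamma21) ^ 2 * mu22) /
          (2 * (1 + sigma * (1 + beta2 * gamma21))) +
        lam * (rho * (1 + beta1 * gamma11) + sigma * (1 + beta2 * gamma21)) /
          (nu * (1 - rho * (1 + beta1 * gamma11))))) := by
  obtain ⟨hm1, B1, hB1, hE1⟩ := delta_expand lam beta1 hlam hbeta1 S1 R1 hS1 hR1 hiS1 hiR1
    hiS1sq hiR1sq h1 δ1 hh1 hδ1
  obtain ⟨hm2, B2, hB2, hE2⟩ := delta_expand lam beta2 hlam hbeta2 S2 R2 hS2 hR2 hiS2 hiR2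
    hiS2sq hiR2sq h2 δ2 hh2 hδ2
  have hmu21n : 0 ≤ mu21 := hmu21 ▸ integral_nonneg_of_ae (ae_nonneg_of_Iio S2 hS2)
  have hg21n : 0 ≤ gamma21 := hgamma21 ▸ integral_nonneg_of_ae (ae_nonneg_of_Iio R2 hR2)
  rw [← hmu11, ← hgamma11, ← hmu12, ← hgamma12] at hB1
  rw [← hmu21, ← hgamma21, ← hmu22, ← hgamma22] at hB2
  simp only [← hmu11, ← hgamma11] at hE1
  simp only [← hmu21, ← hgamma21] at hE2
  have hD : 0 < 1 + sigma * (1 + beta2 * gamma21) := by rw [hsigma]; positivity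
  have hA : 0 < 1 - rho * (1 + beta1 * gamma11) := by linarith
  set D := 1 + sigma * (1 + beta2 * gamma21) with hDd
  set A := 1 - rho * (1 + beta1 * gamma11) with hAd
  have he : Filter.Tendsto (fun z : ℝ => 1 - z) (𝓝[<] 1) (𝓝 0) := by
    refine tendsto_nhdsWithin_of_tendsto_nhds ?_
    have : Continuous fun z : ℝ => 1 - z := by fun_prop
    simpa using this.tendsto 1
  have hM : Filter.Tendsto (fun z => A + (1 - z) * B1 z) (𝓝[<] 1) (𝓝 A) := by
    simpa using (he.mul hB1).const_add A
  have hN : Filter.Tendsto (fun z => D - alpha / lam * ((1 - z) * B2 z)) (𝓝[<] 1) (𝓝 D) := by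
    simpa using ((he.mul hB2).const_mul (alpha / lam)).const_sub D
  have hMpos : ∀ᶠ z in 𝓝[<] (1 : ℝ), 0 < A + (1 - z) * B1 z := hM.eventually_const_lt hA
  have hd1 : ∀ z < 1, δ1 z - z = (1 - z) * (A + (1 - z) * B1 z) := by
    intro z hz
    rw [hAd, hrho]
    linear_combination -(hE1 z hz)
  have hn2 : ∀ z < 1, lam * (1 - z) + alpha * (1 - δ2 z) =
      lam * ((1 - z) * (D - alpha / lam * ((1 - z) * B2 z))) := by
    intro z hz
    rw [hE2 z hz, hDd, hsigma]
    field_simp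
    ring
  set G := lam * (rho * (1 + beta1 * gamma11) + sigma * (1 + beta2 * gamma21)) / (nu * A) with hG
  have hgt : Filter.Tendsto g (𝓝[<] 1) (𝓝 G) := by
    have hnum : Filter.Tendsto (fun z => lam * (rho * (1 + beta1 * gamma11) - (1 - z) * B1 z) +
        lam * (D - 1 - alpha / lam * ((1 - z) * B2 z))) (𝓝[<] 1)
        (𝓝 (lam * (rho * (1 + beta1 * gamma11)) + lam * (D - 1))) := by
      have a1 := (((he.mul hB1).const_sub (rho * (1 + beta1 * gamma11))).const_mul lam).add
        ((((he.mul hB2).const_mul (alpha / lam)).const_sub (D - 1)).const_mul lam)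
      simpa using a1
    have := hnum.div (hM.const_mul nu) (by positivity)
    have e : (lam * (rho * (1 + beta1 * gamma11)) + lam * (D - 1)) / (nu * A) = G := by
      rw [hG, hDd]; congr 1; ring
    rw [e] at this
    refine this.congr' ?_
    filter_upwards [self_mem_nhdsWithin, hMpos] with z hz hp
    have hz' : z < 1 := hz
    have hne : 1 - z ≠ 0 := by linarith
    have hn := hn2 z hz'
    rw [hg, hd1 z hz']
    have e2 : lam * (1 - δ1 z) + alpha * (1 - δ2 z) =
        (1 - z) * (lam * (rho * (1 + beta1 * gamma11) - (1 - z) * B1 z) +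
        lam * (D - 1 - alpha / lam * ((1 - z) * B2 z))) := by
      have := hE1 z hz'
      rw [hrho]
      linear_combination lam * this + hn
    rw [e2, show nu * ((1 - z) * (A + (1 - z) * B1 z)) = (1 - z) * (nu * (A + (1 - z) * B1 z)) by ring,
      mul_div_mul_left _ _ hne]
    rfl
  have hgm : Measurable g := by
    rw [funext hg]; fun_prop
  have hint : HasDerivWithinAt (fun z => ∫ u in z..1, g u) (-G) (Set.Iic 1) 1 := by
    refine intervalIntegral.integral_hasDerivWithinAt_of_tendsto_ae_left (s := Set.Iic 1) (t := Set.Iic 1) ?_ ?_ ?_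
    · exact IntervalIntegrable.refl
    · exact hgm.stronglyMeasurable.stronglyMeasurableAtFilter
    · refine hgt.mono_left ?_
      have h1ae : {x : ℝ | x ≠ 1} ∈ ae (volume : Measure ℝ) := by
        rw [mem_ae_iff]; simp
      intro s hs
      rw [mem_nhdsWithin_iff_eventually] at hs
      rw [Filter.mem_inf_iff_superset]
      refine ⟨{x | x ∈ Set.Iio 1 → x ∈ s} ∩ Set.Iic 1, Filter.inter_mem (mem_nhdsWithin_of_mem_nhds hs) self_mem_nhdsWithin, _, h1ae, ?_⟩
      rintro x ⟨⟨hx, hx2⟩, hx1⟩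
      exact hx (lt_of_le_of_ne hx2 hx1)
  have hφd : HasDerivWithinAt φ G (Set.Iic 1) 1 := by
    have := hint.neg.exp
    rw [funext hφ]
    simpa using this
  have hφ1 : φ 1 = 1 := by rw [hφ]; simp
  have hφs : Filter.Tendsto (fun z => (φ z - 1) / (z - 1)) (𝓝[<] 1) (𝓝 G) := by
    have := (hasDerivWithinAt_iff_tendsto_slope.1 hφd)
    rw [Set.Iic_diff_right] at this
    refine this.congr fun z => ?_
    rw [slope_def_field, hφ1]
  have hfin := ((hN.mul_const (A / D)).mul hφs).div hM hA.ne' |>.add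
    ((((hB2.const_mul (alpha / lam)).mul_const (A / D)).add hB1).div hM hA.ne')
  refine (hfin.congr' ?_).trans (le_of_eq ?_)
  · filter_upwards [self_mem_nhdsWithin, hMpos] with z hz hp
    have hz' : z < 1 := hz
    have hne : 1 - z ≠ 0 := by linarith
    have hne2 : z - 1 ≠ 0 := by linarith
    have hPz : P z = (D - alpha / lam * ((1 - z) * B2 z)) / (A + (1 - z) * B1 z) * (A / D * φ z) := by
      rw [hP, hP0, hn2 z hz', hd1 z hz', mul_div_mul_left _ _ hlam.ne', mul_div_mul_left _ _ hne]
    rw [hPz]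
    simp only [Pi.div_apply]
    have hMne := hp.ne'
    generalize hMM : A + (1 - z) * B1 z = M at hMne ⊢
    have hB1z : B1 z = (M - A) / (1 - z) := by rw [← hMM]; field_simp; ring
    rw [hB1z]
    field_simp
    ring
  · congr 1
    rw [hG]
    field_simp
    ring
end
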